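/- Let P be an Artin-Tits monoid generated by atom set A and F ⊆ A a subset. Then the submonoid P_F generated by F is canonically isomorphic to the Artin-Tits monoid on F with the restricted Coxeter matrix, and for p, q ∈ P_F, if pP ∩ qP ≠ ∅ in P then pP_F ∩ qP_F ≠ ∅ in P_F, with least common multiples of elements of P_F computed in P_F agreeing with those computed in P. -/

import Mathlib

/-- The alternating word `abab⋯` of length `n` in the free monoid on `A`. -/
def altWord {A : Type*} (a b : A) (n : ℕ) : FreeMonoid A :=
  FreeMonoid.ofList ((List.range n).map fun i => if i % 2 = 0 then a else b)

/-- The defining Artin–Tits relations for the Coxeter matrix `M` (no relation for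
`M a b = ∞`). -/
def artinRel {A : Type*} (M : A → A → ℕ∞) : FreeMonoid A → FreeMonoid A → Prop :=
  fun x y => ∃ (a b : A) (n : ℕ), a ≠ b ∧ M a b = (n : ℕ∞) ∧
    x = altWord a b n ∧ y = altWord b a n

/-- The congruence on the free monoid generated by the Artin–Tits relations. -/
def artinCon {A : Type*} (M : A → A → ℕ∞) : Con (FreeMonoid A) := conGen (artinRel M)

/-- The Artin–Tits monoid `P = ⟨A | (ab)^{[m_{a,b}]} = (ba)^{[m_{b,a}]}⟩⁺`. -/
abbrev ArtinTits {A : Type*} (M : A → A → ℕ∞) := (artinCon M).Quotient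

/-- The canonical image of an atom `a ∈ A` in the Artin–Tits monoid. -/
def atGen {A : Type*} (M : A → A → ℕ∞) (a : A) : ArtinTits M :=
  (artinCon M).mk' (FreeMonoid.of a)

/-- The parabolic submonoid `P_F = ⟨F⟩⁺ ⊆ P`. -/
def atParab {A : Type*} (M : A → A → ℕ∞) (F : Set A) : Submonoid (ArtinTits M) :=
  Submonoid.closure ((fun a => atGen M a) '' F)

/-- `c` is a least common multiple (for left divisibility) of `p` and `q`, with all
divisibility witnesses taken in the submonoid `N`. -/
def IsLcmIn {A : Type*} (M : A → A → ℕ∞) (N : Submonoid (ArtinTits M))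
    (p q c : ArtinTits M) : Prop :=
  (∃ r ∈ N, p * r = c) ∧ (∃ r ∈ N, q * r = c) ∧
    ∀ d : ArtinTits M, (∃ r ∈ N, p * r = d) → (∃ r ∈ N, q * r = d) → ∃ r ∈ N, c * r = d

/-!
By Matsumoto's theorem the reduced elements of an Artin–Tits monoid are faithfully represented in
its Coxeter group, and the geometric representation of this group shows that an element with left
descents `a` and `b` has a reduced expression that begins with the braid word of `a` and `b`. Hence
every identity `a x = b y` between reduced elements is a right multiple of the braid relation of
`a` and `b`. This propagates to the whole monoid by induction on the degree: to compose such
identities `a x = c z` and `c z = b y`, complete the two braid relations to the least common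
multiple of the lcms of `c, a` and of `c, b`, which is again reduced. Consequently a common multiple
of `p` and `q` is a multiple of one obtained by completing braid relations, and the latter lies in
every submonoid that contains `p` and `q` and is closed under factors.

The submonoid generated by `F` is closed under factors: since both sides of a braid relation involve
both of its atoms, sending the atoms outside `F` to an adjoined zero is a well-defined homomorphism.
This homomorphism is the identity on the Artin–Tits monoid on `F`, which therefore embeds.
-/

/-- The alternating product `x y x ⋯` with `n` factors: the braid words `(ab)^{[n]}` evaluated in
an arbitrary monoid. -/
def altProd {G : Type*} [Monoid G] (x y : G) : ℕ → G
  | 0 => 1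
  | n + 1 => x * altProd y x n

section Monoid

variable {G H : Type*} [Monoid G] [Monoid H]

theorem altProd_succ (x y : G) (n : ℕ) : altProd x y (n + 1) = x * altProd y x n := rfl

theorem altProd_one (x y : G) : altProd x y 1 = x := mul_one x

theorem map_altProd (f : G →* H) (x y : G) (n : ℕ) :
    f (altProd x y n) = altProd (f x) (f y) n := by
  induction n generalizing x y with
  | zero => exact map_one f
  | succ n ih => rw [altProd, altProd, map_mul, ih]

theorem altProd_add (x y : G) (i j : ℕ) :
    altProd x y (i + j) = altProd x y i * if Even i then altProd x y j else altProd y x j := by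
  induction i generalizing x y with
  | zero => simp [altProd]
  | succ i ih =>
    rw [Nat.add_right_comm, altProd, ih, altProd, mul_assoc]
    by_cases hi : Even i <;> simp [hi, Nat.even_add_one]

theorem altProd_succ' (x y : G) (n : ℕ) :
    altProd x y (n + 1) = altProd x y n * if Even n then x else y := by
  rw [altProd_add, altProd_one, altProd_one]

theorem altProd_two_mul (x y : G) (n : ℕ) : altProd x y (2 * n) = (x * y) ^ n := by
  induction n with
  | zero => simp [altProd]
  | succ n ih => rw [mul_add_one, altProd, altProd, ih, pow_succ', mul_assoc]

theorem altProd_mem (S : Submonoid G) {x y : G} (hx : x ∈ S) (hy : y ∈ S) (n : ℕ) :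
    altProd x y n ∈ S := by
  induction n generalizing x y with
  | zero => exact S.one_mem
  | succ n ih => exact S.mul_mem hx (ih hy hx)

end Monoid

theorem altProd_eq_zero {G : Type*} [MonoidWithZero G] {x y : G} (h : x = 0 ∨ y = 0) {n : ℕ}
    (hn : 2 ≤ n) : altProd x y n = 0 := by
  obtain ⟨n, rfl⟩ := Nat.exists_eq_add_of_le' hn
  rw [altProd, altProd]
  rcases h with rfl | rfl <;> simp

section Group

variable {G : Type*} [Group G] {x y : G}

theorem inv_altProd (hx : x⁻¹ = x) (hy : y⁻¹ = y) (n : ℕ) :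
    (altProd x y n)⁻¹ = if Even n then altProd y x n else altProd x y n := by
  induction n generalizing x y with
  | zero => simp [altProd]
  | succ n ih =>
    have hinv : (altProd x y (n + 1))⁻¹ = (altProd y x n)⁻¹ * x := by
      rw [altProd, mul_inv_rev, hx]
    rw [hinv, ih hy hx]
    by_cases hn : Even n <;> simp [hn, Nat.even_add_one, altProd_succ']

theorem altProd_comm_of_pow_eq_one (hx : x⁻¹ = x) (hy : y⁻¹ = y) {n : ℕ}
    (h : (x * y) ^ n = 1) : altProd x y n = altProd y x n := by
  rw [← mul_inv_eq_one, inv_altProd hy hx, ← altProd_add, ← two_mul, altProd_two_mul, h]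

end Group

namespace GeometricRep

open Real

/-! ### The geometric representation -/

section Reflections

open Polynomial.Chebyshev

theorem chebyshev_eval_add_eval_eq_zero {φ : ℝ} (hφ : sin φ ≠ 0) {j : ℤ}
    (h : (2 * j + 1) * φ = 2 * π) :
    (S ℝ j).eval (2 * cos φ) + (S ℝ (j - 1)).eval (2 * cos φ) = 0 := by
  have hj : ((j : ℝ) + 1) * φ = 2 * π - j * φ := by linear_combination h
  refine (mul_eq_zero.mp ?_).resolve_right hφ
  rw [add_mul, S_two_mul_real_cos, S_two_mul_real_cos, hj, sin_two_pi_sub]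
  simp

theorem chebyshev_eval_eq_zero {φ : ℝ} (hφ : sin φ ≠ 0) {j : ℤ} (h : j * φ = π) :
    (S ℝ (j - 1)).eval (2 * cos φ) = 0 := by
  refine (mul_eq_zero.mp ?_).resolve_right hφ
  rw [S_two_mul_real_cos]
  simp [h]

variable {V : Type*} [AddCommGroup V] [Module ℝ V] {x y : V} {f g : Module.Dual ℝ V}

theorem reflection_mul_reflection_sq_eq_one (hf : f x = 2) (hg : g y = 2) (hfy : f y = 0)
    (hgx : g x = 0) : (Module.reflection hf * Module.reflection hg) ^ 2 = 1 := by
  ext z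
  simp only [pow_two, LinearEquiv.mul_apply, Module.reflection_apply, map_sub, map_smul, hf, hg,
    hfy, hgx, LinearEquiv.coe_one, id_eq]
  module

theorem reflection_mul_reflection_pow_eq_one (hf : f x = 2) (hg : g y = 2) {m : ℕ} (hm : 3 ≤ m)
    (h : f y * g x = 4 * cos (π / m) ^ 2) :
    (Module.reflection hf * Module.reflection hg) ^ m = 1 := by
  have hm' : (3 : ℝ) ≤ m := by exact_mod_cast hm
  set φ := 2 * (π / m) with hφ
  have hmφ : m * φ = 2 * π := by rw [hφ]; field_simp
  have hsin : sin φ ≠ 0 :=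
    (sin_pos_of_pos_of_lt_pi (by positivity) (by nlinarith [pi_pos])).ne'
  have htrace : 2 * cos φ = f y * g x - 2 := by rw [h, hφ, cos_two_mul]; ring
  ext z
  rw [Module.reflection_mul_reflection_pow_apply hf hg m z _ htrace]
  obtain ⟨j, rfl | rfl⟩ := Nat.even_or_odd' m
  · have hzero : (S ℝ (j - 1)).eval (2 * cos φ) = 0 :=
      chebyshev_eval_eq_zero hsin (by push_cast at hmφ ⊢; linarith)
    rw [show (((2 * j : ℕ) : ℤ) - 2) / 2 = j - 1 by omega,
      show (((2 * j : ℕ) : ℤ) - 1) / 2 = j - 1 by omega, hzero]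
    simp
  · have hzero : (S ℝ j).eval (2 * cos φ) + (S ℝ (j - 1)).eval (2 * cos φ) = 0 :=
      chebyshev_eval_add_eval_eq_zero hsin (by push_cast at hmφ ⊢; linarith)
    rw [show (((2 * j + 1 : ℕ) : ℤ) - 2) / 2 = j - 1 by omega,
      show (((2 * j + 1 : ℕ) : ℤ) - 1) / 2 = j by omega,
      show (((2 * j + 1 : ℕ) : ℤ) - 3) / 2 = j - 1 by omega,
      show ((2 * j + 1 : ℕ) : ℤ) / 2 = j by omega, hzero]
    simp

end Reflections

variable {A : Type*} (C : CoxeterMatrix A)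

/-- The simple root `α_a`: the basis vector indexed by `a` of the geometric representation. -/
noncomputable def simpleRoot (a : A) : A →₀ ℝ := Finsupp.single a 1

/-- The simple coroot `2 B(α_a, ·)`, where `B(α_a, α_b) = -cos (π / m_{a,b})` is the canonical
bilinear form. An infinite entry is written `0` in `C`, and `π / 0 = 0` then gives the intended
value `B(α_a, α_b) = -1`. -/
noncomputable def simpleCoroot (a : A) : Module.Dual ℝ (A →₀ ℝ) :=
  Finsupp.linearCombination ℝ fun b => -2 * cos (π / C a b)

theorem simpleCoroot_simpleRoot (a b : A) :
    simpleCoroot C a (simpleRoot b) = -2 * cos (π / C a b) := by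
  simp [simpleCoroot, simpleRoot]

theorem simpleCoroot_simpleRoot_self (a : A) : simpleCoroot C a (simpleRoot a) = 2 := by
  simp [simpleCoroot_simpleRoot]

/-- The reflection in the simple root `α_a`, by which the generator `a` acts. -/
noncomputable def simpleReflection (a : A) : (A →₀ ℝ) ≃ₗ[ℝ] (A →₀ ℝ) :=
  Module.reflection (simpleCoroot_simpleRoot_self C a)

theorem simpleReflection_apply (a : A) (x : A →₀ ℝ) :
    simpleReflection C a x = x - simpleCoroot C a x • simpleRoot a :=
  Module.reflection_apply _ _

theorem isLiftable_simpleReflection : C.IsLiftable (simpleReflection C) := by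
  intro a b
  obtain rfl | hab := eq_or_ne a b
  · rw [C.diagonal, pow_one]
    exact LinearEquiv.ext (Module.involutive_reflection (simpleCoroot_simpleRoot_self C a))
  have hsymm : C b a = C a b := C.symmetric b a
  have hne : C a b ≠ 1 := C.off_diagonal a b hab
  obtain h0 | h2 | h3 : C a b = 0 ∨ C a b = 2 ∨ 3 ≤ C a b := by omega
  · rw [h0, pow_zero]
  · rw [h2]
    apply reflection_mul_reflection_sq_eq_one <;> simp [simpleCoroot_simpleRoot, hsymm, h2]
  · refine reflection_mul_reflection_pow_eq_one _ _ h3 ?_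
    rw [simpleCoroot_simpleRoot, simpleCoroot_simpleRoot, hsymm]
    ring

/-- The coefficient `sin (k θ) / sin θ`, `θ = π / m`, of a simple root in the roots of a dihedral
group of order `2 m`. For `m = 0`, which stands for `∞`, it is the limit value `k`. -/
noncomputable def dihedralCoeff (m k : ℕ) : ℝ :=
  (Polynomial.Chebyshev.U ℝ (k - 1)).eval (cos (π / m))

theorem dihedralCoeff_zero (m : ℕ) : dihedralCoeff m 0 = 0 := by simp [dihedralCoeff]

theorem dihedralCoeff_one (m : ℕ) : dihedralCoeff m 1 = 1 := by simp [dihedralCoeff]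

theorem dihedralCoeff_add_two (m k : ℕ) :
    dihedralCoeff m (k + 2) = 2 * cos (π / m) * dihedralCoeff m (k + 1) - dihedralCoeff m k := by
  have h := congrArg (Polynomial.eval (cos (π / m))) (Polynomial.Chebyshev.U_add_one ℝ k)
  simp only [Polynomial.eval_sub, Polynomial.eval_mul, Polynomial.eval_ofNat,
    Polynomial.eval_X] at h
  simpa only [dihedralCoeff, Nat.cast_add, Nat.cast_one, Nat.cast_ofNat, add_sub_cancel_right,
    show (k : ℤ) + 2 - 1 = k + 1 by ring] using h

theorem dihedralCoeff_nonneg {m k : ℕ} (h : m = 0 ∨ k ≤ m) : 0 ≤ dihedralCoeff m k := by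
  obtain rfl | hm := Nat.eq_zero_or_pos m
  · simp [dihedralCoeff]
  have hk : k ≤ m := by omega
  obtain rfl | hm2 : m = 1 ∨ 2 ≤ m := by omega
  · interval_cases k <;> simp [dihedralCoeff]
  have hm' : (2 : ℝ) ≤ m := by exact_mod_cast hm2
  have hsin : 0 < sin (π / m) :=
    sin_pos_of_pos_of_lt_pi (by positivity) (div_lt_self pi_pos (by linarith))
  have hksin : 0 ≤ sin (k * (π / m)) := by
    refine sin_nonneg_of_nonneg_of_le_pi (by positivity) ?_
    calc k * (π / m) ≤ m * (π / m) := by gcongr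
      _ = π := by field_simp
  have hU := Polynomial.Chebyshev.U_real_cos (π / m) (k - 1)
  push_cast at hU
  rw [sub_add_cancel] at hU
  exact nonneg_of_mul_nonneg_left (hU ▸ hksin) hsin

variable {C} {W : Type*} [Group W] (cs : CoxeterSystem C W)

/-- The geometric representation of a Coxeter group. -/
noncomputable def geomRep : W →* ((A →₀ ℝ) ≃ₗ[ℝ] (A →₀ ℝ)) :=
  cs.lift ⟨simpleReflection C, isLiftable_simpleReflection C⟩

theorem geomRep_simple (a : A) : geomRep cs (cs.simple a) = simpleReflection C a :=
  cs.lift_apply_simple (isLiftable_simpleReflection C) a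

theorem geomRep_inv_altProd_simpleRoot (a b : A) (k : ℕ) :
    geomRep cs (altProd (cs.simple b) (cs.simple a) k)⁻¹ (simpleRoot a) =
      if Even k then
        dihedralCoeff (C a b) (k + 1) • simpleRoot a + dihedralCoeff (C a b) k • simpleRoot b
      else
        dihedralCoeff (C a b) k • simpleRoot a + dihedralCoeff (C a b) (k + 1) • simpleRoot b := by
  induction k with
  | zero => simp [altProd, dihedralCoeff_zero, dihedralCoeff_one]
  | succ k ih =>
    have hsymm : C b a = C a b := C.symmetric b a
    rw [altProd_succ', mul_inv_rev, map_mul, LinearEquiv.mul_apply, ih]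
    by_cases hk : Even k <;>
    · simp only [hk, Nat.even_add_one, if_true, if_false, not_true, not_false_eq_true,
        cs.inv_simple, geomRep_simple, simpleReflection_apply, map_add, map_smul,
        simpleCoroot_simpleRoot, C.diagonal, Nat.cast_one, div_one, cos_pi, hsymm,
        dihedralCoeff_add_two]
      module

theorem geomRep_inv_altProd_mul_nonneg {a b : A} {v : W} {k : ℕ} (hk : C a b = 0 ∨ k < C a b)
    (ha : 0 ≤ geomRep cs v⁻¹ (simpleRoot a)) (hb : 0 ≤ geomRep cs v⁻¹ (simpleRoot b)) :
    0 ≤ geomRep cs (altProd (cs.simple b) (cs.simple a) k * v)⁻¹ (simpleRoot a) := by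
  have hk₀ : 0 ≤ dihedralCoeff (C a b) k := dihedralCoeff_nonneg (by omega)
  have hk₁ : 0 ≤ dihedralCoeff (C a b) (k + 1) := dihedralCoeff_nonneg (by omega)
  rw [mul_inv_rev, map_mul, LinearEquiv.mul_apply, geomRep_inv_altProd_simpleRoot]
  split_ifs <;> rw [map_add, map_smul, map_smul] <;> positivity

/-! ### Descents and alternating prefixes -/

theorem altProd_simple_comm (a b : A) :
    altProd (cs.simple a) (cs.simple b) (C a b) = altProd (cs.simple b) (cs.simple a) (C a b) :=
  altProd_comm_of_pow_eq_one (cs.inv_simple a) (cs.inv_simple b) (cs.simple_mul_simple_pow a b)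

theorem length_altProd_mul_le (a b : A) (k : ℕ) (v : W) :
    cs.length (altProd (cs.simple a) (cs.simple b) k * v) ≤ k + cs.length v := by
  induction k generalizing a b with
  | zero => simp [altProd]
  | succ k ih =>
    calc cs.length (altProd (cs.simple a) (cs.simple b) (k + 1) * v)
        = cs.length (cs.simple a * (altProd (cs.simple b) (cs.simple a) k * v)) := by
          rw [altProd, mul_assoc]
      _ ≤ 1 + (k + cs.length v) := by
          grw [cs.length_mul_le, ih, cs.length_simple]
      _ = k + 1 + cs.length v := by ring

/-- `w` has a reduced expression that begins with the alternating word `a b a ⋯` of length `k`. -/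
def HasAltPrefix (a b : A) (k : ℕ) (w : W) : Prop :=
  ∃ v, w = altProd (cs.simple a) (cs.simple b) k * v ∧ cs.length w = k + cs.length v

variable {cs} {a b : A} {w : W}

theorem HasAltPrefix.isLeftDescent {k : ℕ} (h : HasAltPrefix cs a b (k + 1) w) :
    cs.IsLeftDescent w a := by
  obtain ⟨v, rfl, hlen⟩ := h
  rw [CoxeterSystem.IsLeftDescent, hlen, altProd, mul_assoc, cs.simple_mul_simple_cancel_left]
  have := length_altProd_mul_le cs b a k v
  omega

theorem HasAltPrefix.mono {j k : ℕ} (h : HasAltPrefix cs a b k w) (hjk : j ≤ k) :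
    HasAltPrefix cs a b j w := by
  obtain ⟨v, rfl, hlen⟩ := h
  obtain ⟨i, rfl⟩ := Nat.exists_eq_add_of_le hjk
  have hsplit := altProd_add (cs.simple a) (cs.simple b) j i
  set d := if Even j then altProd (cs.simple a) (cs.simple b) i
    else altProd (cs.simple b) (cs.simple a) i with hd
  have hw : altProd (cs.simple a) (cs.simple b) (j + i) * v =
      altProd (cs.simple a) (cs.simple b) j * (d * v) := by rw [hsplit, mul_assoc]
  refine ⟨d * v, hw, ?_⟩
  have hle := length_altProd_mul_le cs a b j (d * v)
  have hdv : cs.length (d * v) ≤ i + cs.length v := by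
    rw [hd]; split_ifs <;> apply length_altProd_mul_le
  rw [← hw] at hle
  omega

theorem HasAltPrefix.swap (h : HasAltPrefix cs a b (C a b) w) :
    HasAltPrefix cs b a (C a b) w := by
  obtain ⟨v, hw, hlen⟩ := h
  exact ⟨v, altProd_simple_comm cs a b ▸ hw, hlen⟩

theorem eq_altProd_succ_mul_of_isLeftDescent {k : ℕ} {v : W} (hw : cs.IsLeftDescent w a)
    (h : cs.simple a * w = altProd (cs.simple a) (cs.simple b) k * v ∨
      cs.simple a * w = altProd (cs.simple b) (cs.simple a) k * v)
    (hlen : cs.length (cs.simple a * w) = k + cs.length v) :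
    w = altProd (cs.simple a) (cs.simple b) (k + 1) * v ∧ cs.length w = k + 1 + cs.length v := by
  have hba : cs.simple a * w = altProd (cs.simple b) (cs.simple a) k * v := by
    rcases h with h | h
    · cases k with
      | zero => exact h
      | succ k =>
        have hprefix : HasAltPrefix cs a b (k + 1) (cs.simple a * w) := ⟨v, h, hlen⟩
        exact absurd hprefix.isLeftDescent (cs.isLeftDescent_iff_not_isLeftDescent_mul.mp hw)
    · exact h
  refine ⟨?_, ?_⟩
  · rw [altProd, mul_assoc, ← hba, cs.simple_mul_simple_cancel_left]
  · have := cs.isLeftDescent_iff.mp hw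
    omega

variable (cs) in
/-- The coset decomposition of `w` relative to the parabolic subgroup `⟨a, b⟩`. -/
theorem exists_eq_altProd_mul (a b : A) (w : W) :
    ∃ k v, (w = altProd (cs.simple a) (cs.simple b) k * v ∨
        w = altProd (cs.simple b) (cs.simple a) k * v) ∧
      cs.length w = k + cs.length v ∧ ¬ cs.IsLeftDescent v a ∧ ¬ cs.IsLeftDescent v b := by
  induction hn : cs.length w using Nat.strong_induction_on generalizing w with
  | _ n ih =>
    subst hn
    by_cases ha : cs.IsLeftDescent w a
    · obtain ⟨k, v, hw, hlen, hv⟩ := ih _ ha _ rfl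
      obtain ⟨hw', hlen'⟩ := eq_altProd_succ_mul_of_isLeftDescent ha hw hlen
      exact ⟨k + 1, v, Or.inl hw', hlen', hv⟩
    by_cases hb : cs.IsLeftDescent w b
    · obtain ⟨k, v, hw, hlen, hv⟩ := ih _ hb _ rfl
      obtain ⟨hw', hlen'⟩ := eq_altProd_succ_mul_of_isLeftDescent hb hw.symm hlen
      exact ⟨k + 1, v, Or.inr hw', hlen', hv⟩
    exact ⟨0, w, by simp [altProd], by simp, ha, hb⟩

theorem geomRep_inv_simpleRoot_nonneg (h : ¬ cs.IsLeftDescent w a) :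
    0 ≤ geomRep cs w⁻¹ (simpleRoot a) := by
  induction hn : cs.length w using Nat.strong_induction_on generalizing w a with
  | _ n ih =>
    subst hn
    by_cases hw : w = 1
    · simp [hw, simpleRoot]
    obtain ⟨b, hb⟩ := cs.exists_leftDescent_of_ne_one hw
    obtain ⟨k, v, hwv, hlen, hva, hvb⟩ := exists_eq_altProd_mul cs a b w
    obtain _ | k := k
    · simp only [altProd, one_mul, or_self] at hwv
      exact absurd (hwv ▸ hb) hvb
    have hwv' : w = altProd (cs.simple b) (cs.simple a) (k + 1) * v :=
      hwv.resolve_left fun hab => h (HasAltPrefix.isLeftDescent ⟨v, hab, hlen⟩)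
    have hk : C a b = 0 ∨ k + 1 < C a b := by
      by_contra! hk
      have hprefix : HasAltPrefix cs b a (C b a) w :=
        HasAltPrefix.mono ⟨v, hwv', hlen⟩ (C.symmetric b a ▸ hk.2)
      obtain ⟨m, hm⟩ := Nat.exists_eq_succ_of_ne_zero hk.1
      have hswap := hprefix.swap
      rw [C.symmetric b a, hm] at hswap
      exact h hswap.isLeftDescent
    rw [hwv']
    exact geomRep_inv_altProd_mul_nonneg cs hk (ih _ (by omega) hva rfl) (ih _ (by omega) hvb rfl)

theorem not_isLeftDescent_iff_geomRep_nonneg :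
    ¬ cs.IsLeftDescent w a ↔ 0 ≤ geomRep cs w⁻¹ (simpleRoot a) := by
  refine ⟨geomRep_inv_simpleRoot_nonneg, fun h hw => ?_⟩
  have hneg : 0 ≤ -geomRep cs w⁻¹ (simpleRoot a) := by
    have := geomRep_inv_simpleRoot_nonneg (cs.isLeftDescent_iff_not_isLeftDescent_mul.mp hw)
    rwa [mul_inv_rev, map_mul, LinearEquiv.mul_apply, cs.inv_simple, geomRep_simple,
      simpleReflection_apply, simpleCoroot_simpleRoot_self, two_smul, sub_add_cancel_left,
      map_neg] at this
  have hzero : geomRep cs w⁻¹ (simpleRoot a) = 0 := le_antisymm (neg_nonneg.mp hneg) h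
  simp [simpleRoot] at hzero

theorem length_altProd_mul {v : W} (ha : ¬ cs.IsLeftDescent v a) (hb : ¬ cs.IsLeftDescent v b)
    {k : ℕ} (hk : C a b = 0 ∨ k ≤ C a b) :
    cs.length (altProd (cs.simple a) (cs.simple b) k * v) = k + cs.length v := by
  induction k generalizing a b with
  | zero => simp [altProd]
  | succ k ih =>
    have hdesc : ¬ cs.IsLeftDescent (altProd (cs.simple b) (cs.simple a) k * v) a :=
      not_isLeftDescent_iff_geomRep_nonneg.mpr <| geomRep_inv_altProd_mul_nonneg cs (by omega)
        (geomRep_inv_simpleRoot_nonneg ha) (geomRep_inv_simpleRoot_nonneg hb)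
    rw [altProd, mul_assoc, cs.not_isLeftDescent_iff.mp hdesc,
      ih hb ha (by rw [C.symmetric b a]; omega)]
    ring

theorem HasAltPrefix.of_isLeftDescent (ha : cs.IsLeftDescent w a) (hb : cs.IsLeftDescent w b) :
    C a b ≠ 0 ∧ HasAltPrefix cs a b (C a b) w := by
  have of_prefix : ∀ {a b : A}, cs.IsLeftDescent w b → ∀ {k v},
      w = altProd (cs.simple a) (cs.simple b) k * v → cs.length w = k + cs.length v →
      ¬ cs.IsLeftDescent v a → ¬ cs.IsLeftDescent v b →
      C a b ≠ 0 ∧ HasAltPrefix cs a b (C a b) w := by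
    intro a b hb k v hw hlen hva hvb
    have hk : ¬ (C b a = 0 ∨ k + 1 ≤ C b a) := fun hk => by
      have hlen' := length_altProd_mul hvb hva hk
      rw [altProd, mul_assoc, ← hw] at hlen'
      have := cs.isLeftDescent_iff.mp hb
      omega
    rw [C.symmetric b a] at hk
    exact ⟨by omega, HasAltPrefix.mono ⟨v, hw, hlen⟩ (by omega)⟩
  obtain ⟨k, v, hw | hw, hlen, hva, hvb⟩ := exists_eq_altProd_mul cs a b w
  · exact of_prefix hb hw hlen hva hvb
  · obtain ⟨h0, hprefix⟩ := of_prefix ha hw hlen hvb hva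
    rw [C.symmetric a b]
    exact ⟨h0, hprefix.swap⟩

theorem length_mul_altProd {u : W} (ha : ¬ cs.IsRightDescent u a) (hb : ¬ cs.IsRightDescent u b) :
    cs.length (u * altProd (cs.simple a) (cs.simple b) (C a b)) = cs.length u + C a b := by
  rw [← cs.length_inv, mul_inv_rev, inv_altProd (cs.inv_simple a) (cs.inv_simple b),
    ← altProd_simple_comm, ite_self,
    length_altProd_mul (by rwa [cs.isLeftDescent_inv_iff]) (by rwa [cs.isLeftDescent_inv_iff])
      (Or.inr le_rfl), cs.length_inv, add_comm]

end GeometricRep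

namespace ArtinTits

variable {A : Type*} {M : A → A → ℕ∞}

/-! ### The presentation -/

theorem altWord_eq_altProd (a b : A) (n : ℕ) :
    altWord a b n = altProd (FreeMonoid.of a) (FreeMonoid.of b) n := by
  induction n generalizing a b with
  | zero => rfl
  | succ n ih =>
    rw [altProd, ← ih]
    simp only [altWord, List.range_succ_eq_map, List.map_cons, List.map_map, Nat.zero_mod, if_true,
      FreeMonoid.ofList_cons]
    congr 2
    refine List.map_congr_left fun i _ => ?_
    obtain hi | hi := Nat.mod_two_eq_zero_or_one i <;> simp [Nat.add_mod, hi]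

theorem mk_altWord (a b : A) (n : ℕ) :
    (artinCon M).mk' (altWord a b n) = altProd (atGen M a) (atGen M b) n := by
  rw [altWord_eq_altProd, map_altProd]
  rfl

theorem mk_of_mul (a : A) (u : FreeMonoid A) :
    (artinCon M).mk' (FreeMonoid.of a * u) = atGen M a * (artinCon M).mk' u :=
  map_mul _ _ _

theorem altProd_atGen_comm {a b : A} {n : ℕ} (hab : a ≠ b) (h : M a b = n) :
    altProd (atGen M a) (atGen M b) n = altProd (atGen M b) (atGen M a) n := by
  rw [← mk_altWord, ← mk_altWord]
  exact (Con.eq _).mpr (ConGen.Rel.of _ _ ⟨a, b, n, hab, h, rfl, rfl⟩)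

/-- The homomorphism out of an Artin–Tits monoid that is given by images of the atoms satisfying
the braid relations. -/
def lift {G : Type*} [Monoid G] (f : A → G)
    (hf : ∀ a b (n : ℕ), a ≠ b → M a b = n → altProd (f a) (f b) n = altProd (f b) (f a) n) :
    ArtinTits M →* G :=
  (artinCon M).lift (FreeMonoid.lift f) <| Con.conGen_le.mpr <| by
    rintro _ _ ⟨a, b, n, hab, h, rfl, rfl⟩
    simpa only [Con.ker_rel, altWord_eq_altProd, map_altProd, FreeMonoid.lift_eval_of]
      using hf a b n hab h

theorem lift_atGen {G : Type*} [Monoid G] (f : A → G)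
    (hf : ∀ a b (n : ℕ), a ≠ b → M a b = n → altProd (f a) (f b) n = altProd (f b) (f a) n)
    (a : A) : lift f hf (atGen M a) = f a :=
  FreeMonoid.lift_eval_of f a

@[elab_as_elim]
theorem induction_on {p : ArtinTits M → Prop} (x : ArtinTits M) (one : p 1)
    (atGen_mul : ∀ a x, p x → p (atGen M a * x)) : p x := by
  obtain ⟨u, rfl⟩ := Con.mk'_surjective x
  induction u using FreeMonoid.inductionOn' with
  | one => exact one
  | of_mul a u ih => exact mk_of_mul a u ▸ atGen_mul a _ ih

theorem eq_one_or_eq_atGen_mul (x : ArtinTits M) : x = 1 ∨ ∃ a y, x = atGen M a * y := by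
  induction x using induction_on with
  | one => exact Or.inl rfl
  | atGen_mul a y => exact Or.inr ⟨a, y, rfl⟩

/-- The length of the words that represent `x`; it is well defined because the braid relations
are homogeneous. -/
def deg (x : ArtinTits M) : ℕ :=
  (lift (M := M) (fun _ => Multiplicative.ofAdd 1) (fun _ _ _ _ _ => rfl) x).toAdd

@[simp] theorem deg_one : deg (1 : ArtinTits M) = 0 := by simp [deg]

@[simp] theorem deg_mul (x y : ArtinTits M) : deg (x * y) = deg x + deg y := by simp [deg]

@[simp] theorem deg_atGen (a : A) : deg (atGen M a) = 1 := by simp [deg, lift_atGen]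

@[simp] theorem deg_altProd (a b : A) (n : ℕ) :
    deg (altProd (atGen M a) (atGen M b) n) = n := by
  induction n generalizing a b with
  | zero => exact deg_one
  | succ n ih => rw [altProd, deg_mul, deg_atGen, ih, add_comm]

theorem eq_one_of_deg_eq_zero {x : ArtinTits M} (h : deg x = 0) : x = 1 := by
  obtain rfl | ⟨a, y, rfl⟩ := eq_one_or_eq_atGen_mul x
  · rfl
  · simp at h

/-- The Coxeter matrix `C`, in which `0` stands for `∞`, has the same off-diagonal entries as the
`ℕ∞`-valued matrix `M`. The diagonal of `M` is irrelevant. -/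
def Encodes (C : CoxeterMatrix A) (M : A → A → ℕ∞) : Prop :=
  ∀ a b, a ≠ b → ∀ n : ℕ, M a b = n ↔ n ≠ 0 ∧ C a b = n

theorem exists_encodes (hsymm : ∀ a b, M a b = M b a) (hge : ∀ a b, a ≠ b → 2 ≤ M a b) :
    ∃ C : CoxeterMatrix A, Encodes C M := by
  classical
  have ne_natCast : ∀ {a b}, a ≠ b → ∀ {n : ℕ}, n < 2 → M a b ≠ n := fun hab n hn h => by
    have := hge _ _ hab
    rw [h] at this
    exact absurd (by exact_mod_cast this) hn.not_ge
  refine ⟨{ M := Matrix.of fun a b => if a = b then 1 else (M a b).toNat,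
            isSymm := ?_, diagonal := ?_, off_diagonal := ?_ }, ?_⟩
  · ext a b
    simp only [Matrix.transpose_apply, Matrix.of_apply, hsymm b a, eq_comm]
  · simp
  · intro a b hab h
    simp only [Matrix.of_apply, hab, if_false] at h
    rw [ENat.toNat_eq_iff one_ne_zero] at h
    exact ne_natCast hab one_lt_two h
  · intro a b hab n
    change M a b = n ↔ n ≠ 0 ∧ (if a = b then 1 else (M a b).toNat) = n
    rw [if_neg hab]
    constructor
    · intro h
      exact ⟨fun h0 => ne_natCast hab two_pos (h0 ▸ h), by simp [h]⟩
    · rintro ⟨h0, h⟩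
      exact (ENat.toNat_eq_iff h0).mp h

variable {C : CoxeterMatrix A}

theorem Encodes.altProd_atGen_comm (hC : Encodes C M) {a b : A} (h : C a b ≠ 0) :
    altProd (atGen M a) (atGen M b) (C a b) = altProd (atGen M b) (atGen M a) (C a b) := by
  obtain rfl | hab := eq_or_ne a b
  · rfl
  · exact ArtinTits.altProd_atGen_comm hab ((hC a b hab _).mpr ⟨h, rfl⟩)

/-- The identity `a x = b y` is a right multiple of the braid relation of `a` and `b`. For `a = b`
this relation is `a = a`, since `C a a = 1`. -/
def IsBraidMultiple (C : CoxeterMatrix A) (a : A) (x : ArtinTits M) (b : A) (y : ArtinTits M) :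
    Prop :=
  ∃ n z, C a b = n + 1 ∧ x = altProd (atGen M b) (atGen M a) n * z ∧
    y = altProd (atGen M a) (atGen M b) n * z

namespace IsBraidMultiple

variable {a b : A} {x y : ArtinTits M}

theorem refl (C : CoxeterMatrix A) (a : A) (x : ArtinTits M) : IsBraidMultiple C a x a x :=
  ⟨0, x, C.diagonal a, (one_mul x).symm, (one_mul x).symm⟩

theorem symm (h : IsBraidMultiple C a x b y) : IsBraidMultiple C b y a x := by
  obtain ⟨n, z, hn, hx, hy⟩ := h
  exact ⟨n, z, C.symmetric a b ▸ hn, hy, hx⟩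

theorem mul_right (h : IsBraidMultiple C a x b y) (t : ArtinTits M) :
    IsBraidMultiple C a (x * t) b (y * t) := by
  obtain ⟨n, z, hn, rfl, rfl⟩ := h
  exact ⟨n, z * t, hn, mul_assoc _ _ _, mul_assoc _ _ _⟩

theorem atGen_mul_eq (hC : Encodes C M) (h : IsBraidMultiple C a x b y) :
    atGen M a * x = atGen M b * y := by
  obtain ⟨n, z, hn, rfl, rfl⟩ := h
  have hbraid := hC.altProd_atGen_comm (a := a) (b := b) (by omega)
  rw [hn, altProd, altProd] at hbraid
  rw [← mul_assoc, hbraid, mul_assoc]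

end IsBraidMultiple

/-! ### Reduced elements -/

section Reduced

open GeometricRep

variable {W : Type*} [Group W]

/-- The canonical homomorphism from an Artin–Tits monoid to its Coxeter group. -/
def toCoxeter (hC : Encodes C M) (cs : CoxeterSystem C W) : ArtinTits M →* W :=
  lift cs.simple fun a b n hab h => by
    obtain ⟨-, rfl⟩ := (hC a b hab n).mp h
    exact altProd_simple_comm cs a b

/-- `x` is represented by a reduced word of the Coxeter group. -/
def IsReduced (hC : Encodes C M) (cs : CoxeterSystem C W) (x : ArtinTits M) : Prop :=
  cs.length (toCoxeter hC cs x) = deg x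

variable {hC : Encodes C M} {cs : CoxeterSystem C W} {x y : ArtinTits M} {a b : A}

@[simp] theorem toCoxeter_atGen (a : A) : toCoxeter hC cs (atGen M a) = cs.simple a :=
  lift_atGen _ _ _

variable (hC cs) in
theorem length_toCoxeter_le_deg (x : ArtinTits M) : cs.length (toCoxeter hC cs x) ≤ deg x := by
  induction x using induction_on with
  | one => simp
  | atGen_mul a x ih =>
    rw [map_mul, toCoxeter_atGen, deg_mul, deg_atGen]
    grw [cs.length_mul_le, cs.length_simple, ih]

theorem isReduced_atGen (a : A) : IsReduced hC cs (atGen M a) := by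
  rw [IsReduced, toCoxeter_atGen, cs.length_simple, deg_atGen]

theorem IsReduced.of_mul (h : IsReduced hC cs (x * y)) :
    IsReduced hC cs x ∧ IsReduced hC cs y := by
  have hx := length_toCoxeter_le_deg hC cs x
  have hy := length_toCoxeter_le_deg hC cs y
  have hxy := cs.length_mul_le (toCoxeter hC cs x) (toCoxeter hC cs y)
  rw [IsReduced, map_mul, deg_mul] at h
  exact ⟨le_antisymm hx (by omega), le_antisymm hy (by omega)⟩

theorem IsReduced.isLeftDescent (h : IsReduced hC cs (atGen M a * x)) :
    cs.IsLeftDescent (toCoxeter hC cs (atGen M a * x)) a := by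
  rw [CoxeterSystem.IsLeftDescent, h, map_mul, toCoxeter_atGen, cs.simple_mul_simple_cancel_left,
    h.of_mul.2, deg_mul, deg_atGen]
  omega

theorem IsReduced.not_isRightDescent (h : IsReduced hC cs (x * atGen M a)) :
    ¬ cs.IsRightDescent (toCoxeter hC cs x) a := by
  have hx := h.of_mul.1
  rw [IsReduced, map_mul, toCoxeter_atGen, deg_mul, deg_atGen, ← hx] at h
  exact cs.not_isRightDescent_iff.mpr h

theorem IsReduced.mul_altProd (ha : IsReduced hC cs (x * atGen M a))
    (hb : IsReduced hC cs (x * atGen M b)) :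
    IsReduced hC cs (x * altProd (atGen M a) (atGen M b) (C a b)) := by
  rw [IsReduced, map_mul, map_altProd, toCoxeter_atGen, toCoxeter_atGen,
    length_mul_altProd ha.not_isRightDescent hb.not_isRightDescent, deg_mul, deg_altProd,
    ha.of_mul.1]

variable (hC cs) in
theorem exists_isReduced_toCoxeter_eq (w : W) :
    ∃ x : ArtinTits M, IsReduced hC cs x ∧ toCoxeter hC cs x = w := by
  obtain ⟨ω, hω, rfl⟩ := cs.exists_isReduced w
  have hmap : toCoxeter hC cs (ω.map (atGen M)).prod = cs.wordProd ω := by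
    simp [map_list_prod, CoxeterSystem.wordProd, Function.comp_def]
  have hdeg : ∀ ω : List A, deg (ω.map (atGen M)).prod = ω.length := fun ω => by
    induction ω with
    | nil => simp
    | cons a ω ih => simp [ih, add_comm]
  exact ⟨_, by rw [IsReduced, hmap, hdeg, hω], hmap⟩

variable (hC) in
theorem exists_isBraidMultiple_toCoxeter_eq {w : W} (ha : cs.IsLeftDescent w a)
    (hb : cs.IsLeftDescent w b) :
    ∃ x y, IsBraidMultiple C a x b y ∧ IsReduced hC cs (atGen M a * x) ∧
      toCoxeter hC cs (atGen M a * x) = w := by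
  obtain ⟨h0, v, rfl, hlen⟩ := HasAltPrefix.of_isLeftDescent ha hb
  obtain ⟨z, hz, rfl⟩ := exists_isReduced_toCoxeter_eq hC cs v
  obtain ⟨n, hn⟩ := Nat.exists_eq_succ_of_ne_zero h0
  rw [hn] at hlen ⊢
  have hmap : toCoxeter hC cs (altProd (atGen M a) (atGen M b) (n + 1) * z) =
      altProd (cs.simple a) (cs.simple b) (n + 1) * toCoxeter hC cs z := by
    rw [map_mul, map_altProd, toCoxeter_atGen, toCoxeter_atGen]
  refine ⟨_, _, ⟨n, z, hn, rfl, rfl⟩, ?_⟩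
  rw [← mul_assoc, ← altProd]
  exact ⟨by rw [IsReduced, hmap, hlen, hz, deg_mul, deg_altProd], hmap⟩

/-- Matsumoto's theorem. -/
theorem IsReduced.eq_of_toCoxeter_eq (hx : IsReduced hC cs x) (hy : IsReduced hC cs y)
    (h : toCoxeter hC cs x = toCoxeter hC cs y) : x = y := by
  induction hn : deg x using Nat.strong_induction_on generalizing x y with
  | _ n ih =>
    have hdeg : deg x = deg y := by rw [← hx, ← hy, h]
    obtain rfl | ⟨a, x, rfl⟩ := eq_one_or_eq_atGen_mul x
    · exact (eq_one_of_deg_eq_zero (hdeg ▸ deg_one)).symm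
    obtain rfl | ⟨b, y, rfl⟩ := eq_one_or_eq_atGen_mul y
    · simp at hdeg
    have eq_of_head : ∀ {c : A} {x t : ArtinTits M}, deg (atGen M c * x) = n →
        IsReduced hC cs (atGen M c * x) → IsReduced hC cs (atGen M c * t) →
        toCoxeter hC cs (atGen M c * x) = toCoxeter hC cs (atGen M c * t) →
        atGen M c * x = atGen M c * t := by
      intro c x t hcx hx ht hxt
      rw [map_mul, map_mul, mul_right_inj] at hxt
      rw [deg_mul, deg_atGen] at hcx
      rw [ih (deg x) (by omega) hx.of_mul.2 ht.of_mul.2 hxt rfl]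
    obtain ⟨x', y', hxy', hx', hw⟩ := exists_isBraidMultiple_toCoxeter_eq hC hx.isLeftDescent
      (h ▸ hy.isLeftDescent : cs.IsLeftDescent (toCoxeter hC cs (atGen M a * x)) b)
    have heq := hxy'.atGen_mul_eq hC
    calc atGen M a * x = atGen M a * x' := eq_of_head hn hx hx' hw.symm
      _ = atGen M b * y' := heq
      _ = atGen M b * y :=
        (eq_of_head (hdeg ▸ hn) hy (heq ▸ hx') (by rw [← heq, hw, h])).symm

theorem IsReduced.isBraidMultiple (hx : IsReduced hC cs (atGen M a * x))
    (h : atGen M a * x = atGen M b * y) : IsBraidMultiple C a x b y := by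
  have hy : IsReduced hC cs (atGen M b * y) := h ▸ hx
  obtain ⟨x', y', hxy', hx', hw⟩ :=
    exists_isBraidMultiple_toCoxeter_eq hC hx.isLeftDescent (h ▸ hy.isLeftDescent)
  have heq := hxy'.atGen_mul_eq hC
  have hy' : IsReduced hC cs (atGen M b * y') := heq ▸ hx'
  have hw' := hw
  rw [heq, h, map_mul, map_mul, mul_right_inj] at hw'
  rw [map_mul, map_mul, mul_right_inj] at hw
  rwa [hx.of_mul.2.eq_of_toCoxeter_eq hx'.of_mul.2 hw.symm,
    hy.of_mul.2.eq_of_toCoxeter_eq hy'.of_mul.2 hw'.symm]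

end Reduced

/-! ### Least common multiples -/

/-- A set of elements that is closed under left factors and under the lcms of atoms on the right,
relative to a common left factor. -/
structure LcmClosed (C : CoxeterMatrix A) (Q : Set (ArtinTits M)) : Prop where
  of_mul : ∀ {x y}, x * y ∈ Q → x ∈ Q
  mul_altProd_mem : ∀ {g a b}, C a b ≠ 0 → g * atGen M a ∈ Q → g * atGen M b ∈ Q →
    g * altProd (atGen M a) (atGen M b) (C a b) ∈ Q

/-- A set of elements, such as the reduced ones, in which lcms of atoms exist and are given by the
braid relations. -/
structure IsGerm (C : CoxeterMatrix A) (Q : Set (ArtinTits M)) : Prop extends LcmClosed C Q where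
  atGen_mem : ∀ a, atGen M a ∈ Q
  isBraidMultiple : ∀ {a x b y}, atGen M a * x ∈ Q → atGen M a * x = atGen M b * y →
    IsBraidMultiple C a x b y

/-- A submonoid that contains all factors of its elements. -/
def IsFactorClosed {G : Type*} [Monoid G] (S : Submonoid G) : Prop :=
  ∀ ⦃x y⦄, x * y ∈ S → x ∈ S ∧ y ∈ S

theorem isGerm_isReduced {W : Type*} [Group W] (hC : Encodes C M) (cs : CoxeterSystem C W) :
    IsGerm C {x | IsReduced hC cs x} where
  of_mul h := h.of_mul.1
  mul_altProd_mem _ ha hb := IsReduced.mul_altProd ha hb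
  atGen_mem := isReduced_atGen
  isBraidMultiple h := IsReduced.isBraidMultiple h

theorem IsFactorClosed.lcmClosed {S : Submonoid (ArtinTits M)} (hS : IsFactorClosed S)
    (C : CoxeterMatrix A) : LcmClosed C (S : Set (ArtinTits M)) where
  of_mul h := (hS h).1
  mul_altProd_mem _ ha hb := S.mul_mem (hS ha).1 (altProd_mem S (hS ha).2 (hS hb).2 _)

theorem LcmClosed.preimage_mul {Q : Set (ArtinTits M)} (hQ : LcmClosed C Q) (g : ArtinTits M) :
    LcmClosed C ((g * ·) ⁻¹' Q) where
  of_mul h := hQ.of_mul (by simpa only [Set.mem_preimage, mul_assoc] using h)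
  mul_altProd_mem h0 ha hb := by
    simp only [Set.mem_preimage, ← mul_assoc] at ha hb ⊢
    exact hQ.mul_altProd_mem h0 ha hb

theorem LcmClosed.atGen_mul_altProd_mem {Q : Set (ArtinTits M)} (hQ : LcmClosed C Q) {a b : A}
    (ha : atGen M a ∈ Q) (hb : atGen M b ∈ Q) {n : ℕ} (hn : C a b = n + 1) :
    atGen M a * altProd (atGen M b) (atGen M a) n ∈ Q := by
  rw [← altProd_succ, ← hn, ← one_mul (altProd _ _ _)]
  exact hQ.mul_altProd_mem (by omega) (by rwa [one_mul]) (by rwa [one_mul])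

/-- `p r = q s` is the common multiple of `p` and `q` that is obtained by repeatedly completing
braid relations; such a multiple stays in every `LcmClosed` set that contains `p` and `q`. -/
def IsReversing (C : CoxeterMatrix A) (p q r s : ArtinTits M) : Prop :=
  p * r = q * s ∧ ∀ Q : Set (ArtinTits M), LcmClosed C Q → p ∈ Q → q ∈ Q → p * r ∈ Q

namespace IsReversing

variable {p q r s p' q' r₁ s₁ r₂ s₂ r₃ s₃ : ArtinTits M} {a b : A} {n : ℕ}

theorem one_left (C : CoxeterMatrix A) (q : ArtinTits M) : IsReversing C 1 q q 1 :=
  ⟨by rw [one_mul, mul_one], fun _ _ _ hq => by rwa [one_mul]⟩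

theorem symm (h : IsReversing C p q r s) : IsReversing C q p s r :=
  ⟨h.1.symm, fun Q hQ hq hp => h.1 ▸ h.2 Q hQ hp hq⟩

theorem atGen_mul (hC : Encodes C M) (hn : C a b = n + 1)
    (h₁ : IsReversing C p' (altProd (atGen M b) (atGen M a) n) r₁ s₁)
    (h₂ : IsReversing C q' (altProd (atGen M a) (atGen M b) n) r₂ s₂)
    (h₃ : IsReversing C s₁ s₂ r₃ s₃) :
    IsReversing C (atGen M a * p') (atGen M b * q') (r₁ * r₃) (r₂ * s₃) := by
  set Δ := atGen M a * altProd (atGen M b) (atGen M a) n with hΔ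
  have hΔ' : Δ = atGen M b * altProd (atGen M a) (atGen M b) n :=
    IsBraidMultiple.atGen_mul_eq hC ⟨n, 1, hn, (mul_one _).symm, (mul_one _).symm⟩
  have hp' : atGen M a * (p' * r₁) = Δ * s₁ := by rw [h₁.1, hΔ, mul_assoc]
  have hq' : atGen M b * (q' * r₂) = Δ * s₂ := by rw [h₂.1, hΔ', mul_assoc]
  have hp : atGen M a * p' * (r₁ * r₃) = Δ * (s₁ * r₃) := by
    rw [mul_assoc, ← mul_assoc p', ← mul_assoc, hp', mul_assoc]
  have hq : atGen M b * q' * (r₂ * s₃) = Δ * (s₂ * s₃) := by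
    rw [mul_assoc, ← mul_assoc q', ← mul_assoc, hq', mul_assoc]
  refine ⟨by rw [hp, hq, h₃.1], fun Q hQ hpQ hqQ => ?_⟩
  have hΔQ : Δ ∈ Q := hQ.atGen_mul_altProd_mem (hQ.of_mul hpQ) (hQ.of_mul hqQ) hn
  have hs₁ : Δ * s₁ ∈ Q := hp' ▸ h₁.2 _ (hQ.preimage_mul (atGen M a)) hpQ hΔQ
  have hs₂ : Δ * s₂ ∈ Q :=
    hq' ▸ h₂.2 _ (hQ.preimage_mul (atGen M b)) hqQ (by rwa [Set.mem_preimage, ← hΔ'])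
  exact hp ▸ h₃.2 _ (hQ.preimage_mul Δ) hs₁ hs₂

end IsReversing

/-- Up to degree `N`, the braid relations give the lcms of atoms: every identity between multiples
of two atoms is a multiple of their braid relation. -/
def HasAtomLcms (M : A → A → ℕ∞) (C : CoxeterMatrix A) (N : ℕ) : Prop :=
  ∀ a b (x y : ArtinTits M), deg (atGen M a * x) ≤ N → atGen M a * x = atGen M b * y →
    IsBraidMultiple C a x b y

theorem HasAtomLcms.exists_isReversing {N : ℕ} (hN : HasAtomLcms M C N) (hC : Encodes C M)
    {p q u v : ArtinTits M} (hdeg : deg (p * u) ≤ N) (h : p * u = q * v) :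
    ∃ r s w, IsReversing C p q r s ∧ u = r * w ∧ v = s * w := by
  induction hd : deg (p * u) using Nat.strong_induction_on generalizing p q u v with
  | _ d ih =>
    have exists_of_lt : ∀ {p q u v : ArtinTits M}, p * u = q * v → deg (p * u) < d →
        ∃ r s w, IsReversing C p q r s ∧ u = r * w ∧ v = s * w :=
      fun h hlt => ih _ hlt (by omega) h rfl
    obtain rfl | ⟨a, p, rfl⟩ := eq_one_or_eq_atGen_mul p
    · exact ⟨q, 1, v, .one_left C q, by simpa using h, (one_mul v).symm⟩
    obtain rfl | ⟨b, q, rfl⟩ := eq_one_or_eq_atGen_mul q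
    · exact ⟨1, atGen M a * p, u, (IsReversing.one_left C _).symm, (one_mul u).symm,
        by simpa using h.symm⟩
    have hd' := h ▸ hd
    rw [mul_assoc, deg_mul, deg_atGen] at hd hd'
    rw [mul_assoc, mul_assoc] at h
    obtain ⟨n, z, hn, hpu, hqv⟩ := hN a b _ _ (by rwa [← mul_assoc]) h
    obtain ⟨r₁, s₁, w₁, h₁, rfl, hz₁⟩ := exists_of_lt hpu (by omega)
    obtain ⟨r₂, s₂, w₂, h₂, rfl, hz₂⟩ := exists_of_lt hqv (by omega)
    have hz : deg (s₁ * w₁) < d := by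
      rw [hpu, deg_mul, hz₁] at hd
      omega
    obtain ⟨r₃, s₃, w, h₃, rfl, rfl⟩ := exists_of_lt (hz₁.symm.trans hz₂) hz
    exact ⟨r₁ * r₃, r₂ * s₃, w, .atGen_mul hC hn h₁ h₂ h₃, (mul_assoc _ _ _).symm,
      (mul_assoc _ _ _).symm⟩

variable {a b c : A} {x y z : ArtinTits M} {Q : Set (ArtinTits M)} {N : ℕ}

theorem HasAtomLcms.isBraidMultiple_trans (hN : HasAtomLcms M C N) (hC : Encodes C M)
    (hQ : IsGerm C Q) (hz : deg z ≤ N) (hac : IsBraidMultiple C a x c z)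
    (hcb : IsBraidMultiple C c z b y) : IsBraidMultiple C a x b y := by
  obtain ⟨m, u, hm, rfl, hu⟩ := hac
  obtain ⟨n, v, hn, hv, rfl⟩ := hcb
  obtain ⟨r, s, w, hrs, rfl, rfl⟩ := hN.exists_isReversing hC (hu ▸ hz) (hu.symm.trans hv)
  rw [C.symmetric a c] at hm
  have ha : atGen M c * altProd (atGen M a) (atGen M c) m ∈ Q :=
    hQ.atGen_mul_altProd_mem (hQ.atGen_mem c) (hQ.atGen_mem a) hm
  have hb : atGen M c * altProd (atGen M b) (atGen M c) n ∈ Q :=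
    hQ.atGen_mul_altProd_mem (hQ.atGen_mem c) (hQ.atGen_mem b) hn
  have hr : atGen M c * (altProd (atGen M a) (atGen M c) m * r) ∈ Q :=
    hrs.2 _ (hQ.preimage_mul (atGen M c)) ha hb
  have hac : atGen M c * (altProd (atGen M a) (atGen M c) m * r) =
      atGen M a * (altProd (atGen M c) (atGen M a) m * r) :=
    IsBraidMultiple.atGen_mul_eq hC ⟨m, r, hm, rfl, rfl⟩
  have hcb : atGen M c * (altProd (atGen M b) (atGen M c) n * s) =
      atGen M b * (altProd (atGen M c) (atGen M b) n * s) :=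
    IsBraidMultiple.atGen_mul_eq hC ⟨n, s, hn, rfl, rfl⟩
  rw [← mul_assoc, ← mul_assoc]
  exact (hQ.isBraidMultiple (hac ▸ hr) (by rw [← hac, hrs.1, hcb])).mul_right w

/-- Either both words are empty, or their first letters and remainders satisfy `IsBraidMultiple`.
Unlike `IsBraidMultiple`, this is a relation on words, so it can be proved for equivalent words by
induction on the derivation of the equivalence. -/
def WordBraidMultiple (M : A → A → ℕ∞) (C : CoxeterMatrix A) (u v : FreeMonoid A) : Prop :=
  (u = 1 ∧ v = 1) ∨ ∃ a b u' v', u = FreeMonoid.of a * u' ∧ v = FreeMonoid.of b * v' ∧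
    IsBraidMultiple C a ((artinCon M).mk' u') b ((artinCon M).mk' v')

theorem of_mul_inj {u v : FreeMonoid A} :
    FreeMonoid.of a * u = FreeMonoid.of b * v ↔ a = b ∧ u = v :=
  List.cons_eq_cons

theorem of_mul_ne_one {u : FreeMonoid A} : FreeMonoid.of a * u ≠ 1 :=
  List.cons_ne_nil _ _

theorem wordBraidMultiple_of_mul_iff {u v : FreeMonoid A} :
    WordBraidMultiple M C (FreeMonoid.of a * u) (FreeMonoid.of b * v) ↔
      IsBraidMultiple C a ((artinCon M).mk' u) b ((artinCon M).mk' v) := by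
  refine ⟨?_, fun h => Or.inr ⟨a, b, u, v, rfl, rfl, h⟩⟩
  rintro (⟨h, -⟩ | ⟨a', b', u', v', hu, hv, h⟩)
  · exact absurd h of_mul_ne_one
  · obtain ⟨rfl, rfl⟩ := of_mul_inj.mp hu
    obtain ⟨rfl, rfl⟩ := of_mul_inj.mp hv
    exact h

namespace WordBraidMultiple

variable {u v w u' v' : FreeMonoid A}

theorem refl (M : A → A → ℕ∞) (C : CoxeterMatrix A) (u : FreeMonoid A) :
    WordBraidMultiple M C u u := by
  cases u using FreeMonoid.casesOn with
  | one => exact Or.inl ⟨rfl, rfl⟩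
  | of_mul a u => exact Or.inr ⟨a, a, u, u, rfl, rfl, .refl C a _⟩

theorem of_artinRel (hC : Encodes C M) (h : artinRel M u v) : WordBraidMultiple M C u v := by
  obtain ⟨a, b, n, hab, hn, rfl, rfl⟩ := h
  obtain ⟨h0, hCn⟩ := (hC a b hab n).mp hn
  obtain ⟨n, rfl⟩ := Nat.exists_eq_succ_of_ne_zero h0
  refine Or.inr ⟨a, b, altWord b a n, altWord a b n, ?_, ?_, n, 1, hCn, ?_, ?_⟩ <;>
    simp only [altWord_eq_altProd, altProd_succ, map_altProd, mul_one] <;> rfl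

theorem symm (h : WordBraidMultiple M C u v) : WordBraidMultiple M C v u := by
  obtain ⟨hu, hv⟩ | ⟨a, b, u', v', hu, hv, h⟩ := h
  · exact Or.inl ⟨hv, hu⟩
  · exact Or.inr ⟨b, a, v', u', hv, hu, h.symm⟩

theorem trans (hN : HasAtomLcms M C N) (hC : Encodes C M) (hQ : IsGerm C Q)
    (hdeg : deg ((artinCon M).mk' v) ≤ N + 1) (huv : WordBraidMultiple M C u v)
    (hvw : WordBraidMultiple M C v w) : WordBraidMultiple M C u w := by
  obtain ⟨rfl, rfl⟩ | ⟨a, c, u, v, rfl, rfl, huv⟩ := huv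
  · exact hvw
  obtain ⟨hv, -⟩ | ⟨c', b, v', w, hv, rfl, hvw⟩ := hvw
  · exact absurd hv of_mul_ne_one
  obtain ⟨rfl, rfl⟩ := of_mul_inj.mp hv
  rw [mk_of_mul, deg_mul, deg_atGen] at hdeg
  exact Or.inr ⟨a, b, u, w, rfl, rfl, hN.isBraidMultiple_trans hC hQ (by omega) huv hvw⟩

theorem mul (h : WordBraidMultiple M C u v) (h' : WordBraidMultiple M C u' v')
    (hmk : (artinCon M).mk' u' = (artinCon M).mk' v') :
    WordBraidMultiple M C (u * u') (v * v') := by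
  obtain ⟨rfl, rfl⟩ | ⟨a, b, u, v, rfl, rfl, h⟩ := h
  · rwa [one_mul, one_mul]
  · refine Or.inr ⟨a, b, u * u', v * v', mul_assoc _ _ _, mul_assoc _ _ _, ?_⟩
    rw [map_mul, map_mul, hmk]
    exact h.mul_right _

theorem of_rel (hN : HasAtomLcms M C N) (hC : Encodes C M) (hQ : IsGerm C Q)
    (h : ConGen.Rel (artinRel M) u v) (hdeg : deg ((artinCon M).mk' u) ≤ N + 1) :
    WordBraidMultiple M C u v := by
  have mk_eq : ∀ {u v : FreeMonoid A}, ConGen.Rel (artinRel M) u v →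
      (artinCon M).mk' u = (artinCon M).mk' v := fun h => (Con.eq _).mpr h
  induction h with
  | of u v h => exact of_artinRel hC h
  | refl u => exact refl M C u
  | symm h ih => exact (ih (mk_eq h ▸ hdeg)).symm
  | trans huv _ ihuv ihvw =>
    have hdeg' := mk_eq huv ▸ hdeg
    exact trans hN hC hQ hdeg' (ihuv hdeg) (ihvw hdeg')
  | mul _ h' ih ih' =>
    rw [map_mul, deg_mul] at hdeg
    exact (ih (by omega)).mul (ih' (by omega)) (mk_eq h')

end WordBraidMultiple

theorem hasAtomLcms (hC : Encodes C M) (N : ℕ) : HasAtomLcms M C N := by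
  induction N with
  | zero => intro a b x y hdeg; simp at hdeg
  | succ N ih =>
    intro a b x y hdeg h
    obtain ⟨u, rfl⟩ := Con.mk'_surjective x
    obtain ⟨v, rfl⟩ := Con.mk'_surjective y
    rw [← mk_of_mul] at hdeg h
    rw [← mk_of_mul] at h
    exact wordBraidMultiple_of_mul_iff.mp <|
      .of_rel ih hC (isGerm_isReduced hC C.toCoxeterSystem) ((Con.eq _).mp h) hdeg

theorem IsFactorClosed.exists_mul_eq_mul {S : Submonoid (ArtinTits M)} (hS : IsFactorClosed S)
    (hC : Encodes C M) {p q u v : ArtinTits M} (hp : p ∈ S) (hq : q ∈ S) (h : p * u = q * v) :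
    ∃ r ∈ S, ∃ s ∈ S, ∃ w, p * r = q * s ∧ u = r * w ∧ v = s * w := by
  obtain ⟨r, s, w, ⟨hrs, hQ⟩, hu, hv⟩ := (hasAtomLcms hC _).exists_isReversing hC le_rfl h
  have hpr : p * r ∈ S := hQ S (hS.lcmClosed C) hp hq
  exact ⟨r, (hS hpr).2, s, (hS (hrs ▸ hpr)).2, w, hrs, hu, hv⟩

theorem IsFactorClosed.isLcmIn_iff_isLcmIn_top {S : Submonoid (ArtinTits M)}
    (hS : IsFactorClosed S) (hC : Encodes C M) {p q c : ArtinTits M} (hp : p ∈ S) (hq : q ∈ S) :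
    IsLcmIn M S p q c ↔ IsLcmIn M ⊤ p q c := by
  constructor
  · rintro ⟨⟨r, -, hr⟩, ⟨s, -, hs⟩, hmin⟩
    refine ⟨⟨r, trivial, hr⟩, ⟨s, trivial, hs⟩, ?_⟩
    rintro _ ⟨u, -, rfl⟩ ⟨v, -, hv⟩
    obtain ⟨r', hr', s', hs', w, hrs', rfl, rfl⟩ := hS.exists_mul_eq_mul hC hp hq hv.symm
    obtain ⟨t, -, ht⟩ := hmin (p * r') ⟨r', hr', rfl⟩ ⟨s', hs', hrs'.symm⟩
    exact ⟨t * w, trivial, by rw [← mul_assoc, ht, mul_assoc]⟩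
  · rintro ⟨⟨r, -, hr⟩, ⟨s, -, hs⟩, hmin⟩
    obtain ⟨r', hr', s', -, -, hrs', -, -⟩ := hS.exists_mul_eq_mul hC hp hq (hr.trans hs.symm)
    obtain ⟨t, -, ht⟩ := hmin (p * r') ⟨r', trivial, rfl⟩ ⟨s', trivial, hrs'.symm⟩
    have hc : c ∈ S := (hS (ht ▸ S.mul_mem hp hr')).1
    refine ⟨⟨r, (hS (hr ▸ hc)).2, hr⟩, ⟨s, (hS (hs ▸ hc)).2, hs⟩, ?_⟩
    rintro _ ⟨u, hu, rfl⟩ ⟨v, -, hv⟩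
    obtain ⟨t, -, ht⟩ := hmin (p * u) ⟨u, trivial, rfl⟩ ⟨v, trivial, hv⟩
    exact ⟨t, (hS (ht ▸ S.mul_mem hp hu)).2, ht⟩

/-! ### Parabolic submonoids -/

/-- The restriction of a Coxeter matrix to a set of atoms. -/
abbrev restrict (M : A → A → ℕ∞) (F : Set A) : F → F → ℕ∞ := fun u v => M u v

variable {F : Set A}

theorem atGen_mem_atParab {a : A} (ha : a ∈ F) : atGen M a ∈ atParab M F :=
  Submonoid.subset_closure ⟨a, ha, rfl⟩

/-- The canonical homomorphism from the Artin–Tits monoid on `F` to the one on `A`. -/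
def inclusion (M : A → A → ℕ∞) (F : Set A) : ArtinTits (restrict M F) →* ArtinTits M :=
  lift (fun f => atGen M f) fun _ _ _ hab h => altProd_atGen_comm (Subtype.coe_injective.ne hab) h

theorem inclusion_atGen (f : F) : inclusion M F (atGen (restrict M F) f) = atGen M f :=
  lift_atGen _ _ _

theorem mrange_inclusion (M : A → A → ℕ∞) (F : Set A) :
    MonoidHom.mrange (inclusion M F) = atParab M F := by
  refine le_antisymm ?_ (Submonoid.closure_le.mpr ?_)
  · rintro _ ⟨x, rfl⟩
    induction x using induction_on with
    | one => exact one_mem _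
    | atGen_mul f x ih =>
      rw [map_mul, inclusion_atGen]
      exact mul_mem (atGen_mem_atParab f.2) ih
  · rintro _ ⟨a, ha, rfl⟩
    exact ⟨_, inclusion_atGen ⟨a, ha⟩⟩

section Retraction

variable (hge : ∀ a b, a ≠ b → 2 ≤ M a b)

open Classical in
/-- The homomorphism that fixes the atoms in `F` and sends the other atoms to an adjoined zero. The
braid relations survive because both sides of each one involve both atoms. -/
noncomputable def retraction (F : Set A) : ArtinTits M →* WithZero (ArtinTits (restrict M F)) :=
  lift (fun a => if h : a ∈ F then (atGen (restrict M F) ⟨a, h⟩ : ArtinTits _) else 0)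
    fun a b n hab h => by
      have hn : 2 ≤ n := by exact_mod_cast h ▸ hge a b hab
      by_cases ha : a ∈ F
      · by_cases hb : b ∈ F
        · have hbraid := altProd_atGen_comm (M := restrict M F) (a := ⟨a, ha⟩) (b := ⟨b, hb⟩)
            (by simpa using hab) h
          have hcoe := congrArg WithZero.coeMonoidHom hbraid
          rw [map_altProd, map_altProd] at hcoe
          simp only [ha, hb, dif_pos]
          exact hcoe
        · rw [altProd_eq_zero (Or.inr (dif_neg hb)) hn, altProd_eq_zero (Or.inl (dif_neg hb)) hn]
      · rw [altProd_eq_zero (Or.inl (dif_neg ha)) hn, altProd_eq_zero (Or.inr (dif_neg ha)) hn]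

theorem retraction_atGen (f : F) : retraction hge F (atGen M f) = atGen (restrict M F) f := by
  rw [retraction, lift_atGen, dif_pos f.2]

theorem retraction_atGen_of_notMem {a : A} (ha : a ∉ F) : retraction hge F (atGen M a) = 0 := by
  rw [retraction, lift_atGen, dif_neg ha]

theorem retraction_inclusion (x : ArtinTits (restrict M F)) :
    retraction hge F (inclusion M F x) = x := by
  induction x using induction_on with
  | one => simp
  | atGen_mul f x ih =>
    rw [map_mul, map_mul, ih, inclusion_atGen, retraction_atGen, WithZero.coe_mul]

include hge in
theorem inclusion_injective : Function.Injective (inclusion M F) := fun x y h =>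
  WithZero.coe_inj.mp <| by
    rw [← retraction_inclusion hge x, ← retraction_inclusion hge y, h]

theorem mem_atParab_iff_retraction_ne_zero {x : ArtinTits M} :
    x ∈ atParab M F ↔ retraction hge F x ≠ 0 := by
  constructor
  · rw [← mrange_inclusion]
    rintro ⟨y, rfl⟩
    rw [retraction_inclusion]
    exact WithZero.coe_ne_zero
  · induction x using induction_on with
    | one => exact fun _ => one_mem _
    | atGen_mul a x ih =>
      intro h
      rw [map_mul, mul_ne_zero_iff] at h
      have ha : a ∈ F := not_not.mp fun ha => h.1 (retraction_atGen_of_notMem hge ha)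
      exact mul_mem (atGen_mem_atParab ha) (ih h.2)

include hge in
theorem isFactorClosed_atParab : IsFactorClosed (atParab M F) := fun x y h => by
  simpa only [mem_atParab_iff_retraction_ne_zero hge, map_mul, mul_ne_zero_iff] using h

/-- The canonical isomorphism from the Artin–Tits monoid on `F` to the parabolic submonoid. -/
noncomputable def parabEquiv (F : Set A) : ArtinTits (restrict M F) ≃* atParab M F :=
  (MulEquiv.ofBijective (inclusion M F).mrangeRestrict
    ⟨fun _ _ h => inclusion_injective hge (congrArg Subtype.val h),
      (inclusion M F).mrangeRestrict_surjective⟩).trans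
    (MulEquiv.submonoidCongr (mrange_inclusion M F))

theorem coe_parabEquiv_atGen (f : F) :
    (parabEquiv hge F (atGen (restrict M F) f) : ArtinTits M) = atGen M f :=
  inclusion_atGen f

end Retraction

end ArtinTits

/-- Let `P` be an Artin–Tits monoid on the atom set `A` and `F ⊆ A`.  Then:
(1) the submonoid `P_F = ⟨F⟩⁺` is canonically isomorphic to the Artin–Tits monoid on `F`
with the restricted Coxeter matrix;
(2) for `p, q ∈ P_F`, if `pP ∩ qP ≠ ∅` in `P` then `pP_F ∩ qP_F ≠ ∅` in `P_F`;
(3) least common multiples of elements of `P_F` computed in `P_F` agree with those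
computed in `P`. -/
theorem parabolic_submonoid {A : Type*} (M : A → A → ℕ∞)
    (hsymm : ∀ a b : A, M a b = M b a)
    (hge : ∀ a b : A, a ≠ b → 2 ≤ M a b)
    (F : Set A) :
    (∃ φ : ArtinTits (fun u v : F => M u.val v.val) ≃* atParab M F,
      ∀ f : F, ((φ (atGen (fun u v : F => M u.val v.val) f) : atParab M F) : ArtinTits M)
        = atGen M f.val) ∧
    (∀ p ∈ atParab M F, ∀ q ∈ atParab M F,
      (∃ u v : ArtinTits M, p * u = q * v) →
        ∃ u ∈ atParab M F, ∃ v ∈ atParab M F, p * u = q * v) ∧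
    (∀ p ∈ atParab M F, ∀ q ∈ atParab M F, ∀ c ∈ atParab M F,
      (IsLcmIn M (atParab M F) p q c ↔ IsLcmIn M ⊤ p q c)) := by
  obtain ⟨C, hC⟩ := ArtinTits.exists_encodes hsymm hge
  have hF : ArtinTits.IsFactorClosed (atParab M F) := ArtinTits.isFactorClosed_atParab hge
  refine ⟨⟨ArtinTits.parabEquiv hge F, ArtinTits.coe_parabEquiv_atGen hge⟩, ?_, ?_⟩
  · rintro p hp q hq ⟨u, v, h⟩
    obtain ⟨r, hr, s, hs, -, hrs, -, -⟩ := hF.exists_mul_eq_mul hC hp hq h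
    exact ⟨r, hr, s, hs, hrs⟩
  · intro p hp q hq c _
    exact hF.isLcmIn_iff_isLcmIn_top hC hp hq
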